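/- Let n ≥ 2, m ≥ 2, and 𝐚 = (a₁,…,a_m) ∈ [1,∞)^m with a_j ≤ n for every j. Then there is a constant C such that for every i ∈ {1,…,m}, all nonnegative measurable f₁,…,f_m on ℝⁿ, and all x ∈ ℝⁿ: 𝔐_m^𝐚(f₁,…,f_m)(x) ≤ C · ℳ_s f_i(x) · ∏_{j≠i} M f_j(x). -/

import Mathlib

open MeasureTheory Metric Set
open scoped ENNReal NNReal

noncomputable section

abbrev Rn (n : ℕ) : Type := EuclideanSpace ℝ (Fin n)

/-- The degenerate surface `S_m^𝐚 = {(y¹,…,y^m) ∈ (ℝⁿ)^m : Σ_j |y^j|^{a_j} = 1}`. -/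
def Sm (n m : ℕ) (a : Fin m → ℝ) : Set (Fin m → Rn n) :=
  {y | ∑ j, ‖y j‖ ^ (a j) = 1}

/-- The normalized surface measure on `S_m^𝐚`, realized as the normalized
`(mn-1)`-dimensional Hausdorff measure restricted to the surface. -/
def μSm (n m : ℕ) (a : Fin m → ℝ) : Measure (Fin m → Rn n) :=
  (μH[((m : ℝ) * n - 1)] (Sm n m a))⁻¹ • (μH[((m : ℝ) * n - 1)]).restrict (Sm n m a)

/-- The `m`-linear average of nonnegative functions, as an `ℝ≥0∞`-valued integral. -/
def mAvgE (n m : ℕ) (a : Fin m → ℝ) (f : Fin m → Rn n → ℝ) (t : Fin m → ℝ) (x : Rn n) :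
    ℝ≥0∞ :=
  ∫⁻ y, ∏ j, ENNReal.ofReal (f j (x - t j • y j)) ∂(μSm n m a)

/-- The `m`-linear maximal function `𝔐_m^𝐚` (for nonnegative functions). -/
def mMaxE (n m : ℕ) (a : Fin m → ℝ) (f : Fin m → Rn n → ℝ) (x : Rn n) : ℝ≥0∞ :=
  ⨆ (t : Fin m → ℝ) (_ : ∀ j, 0 < t j), mAvgE n m a f t x

/-- Surface measure on the unit sphere `𝕊^{n-1} ⊆ ℝⁿ`: the `(n-1)`-dimensional
Hausdorff measure restricted to the sphere, normalized. -/
def μSph (n : ℕ) : Measure (Rn n) :=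
  (μH[((n : ℝ) - 1)] (sphere (0 : Rn n) 1))⁻¹ •
    (μH[((n : ℝ) - 1)]).restrict (sphere (0 : Rn n) 1)

/-- The spherical average `𝔄g(x,t)` for nonnegative `g`. -/
def sphAvgE (n : ℕ) (g : Rn n → ℝ) (x : Rn n) (t : ℝ) : ℝ≥0∞ :=
  ∫⁻ θ, ENNReal.ofReal (g (x - t • θ)) ∂(μSph n)

/-- The spherical maximal function `ℳ_s`. -/
def sphMax (n : ℕ) (f : Rn n → ℝ) (x : Rn n) : ℝ≥0∞ :=
  ⨆ t ∈ Ioi (0 : ℝ), sphAvgE n f x t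

/-- The Hardy–Littlewood maximal function on `ℝⁿ`. -/
def HLMax (n : ℕ) (f : Rn n → ℝ) (x : Rn n) : ℝ≥0∞ :=
  ⨆ r ∈ Ioi (0 : ℝ), (∫⁻ y in ball x r, ENNReal.ofReal |f y|) / volume (ball x r)


/-- Lower density bounds give an upper bound on Hausdorff measure. -/
lemma hausdorff_le_of_density {X : Type*} [MetricSpace X] [SecondCountableTopology X]
    [MeasurableSpace X] [BorelSpace X] (ν : Measure X) [IsFiniteMeasure ν] (d : ℝ) (hd : 0 ≤ d)
    (c : ℝ) (hc : 0 < c) (E : Set X)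
    (h : ∀ x ∈ E, ∀ r, 0 < r → r ≤ 1 → ENNReal.ofReal (c * r ^ d) ≤ ν (closedBall x r)) :
    μH[d] E ≤ ENNReal.ofReal (10 ^ d / c) * ν E := by
  have hC0 : ENNReal.ofReal (10 ^ d / c) ≠ ∞ := ENNReal.ofReal_ne_top
  have key : ∀ U : Set X, E ⊆ U → IsOpen U → μH[d] E ≤ ENNReal.ofReal (10 ^ d / c) * ν U := by
    intro U hEU hU
    have step : ∀ k : ℕ, ∃ (u : Set X) (r : X → ℝ), u.Countable ∧
        (∀ x ∈ u, 0 < r x ∧ r x ≤ 1 / ((k : ℝ) + 1)) ∧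
        (E ⊆ ⋃ x : u, closedBall (x : X) (5 * r x)) ∧
        ∑' x : u, ENNReal.ofReal ((10 * r x) ^ d) ≤ ENNReal.ofReal (10 ^ d / c) * ν U := by
      intro k
      have hr : ∀ x : X, ∃ r : ℝ, x ∈ E → 0 < r ∧ r ≤ 1 / ((k : ℝ) + 1) ∧ closedBall x r ⊆ U := by
        intro x
        by_cases hx : x ∈ E
        · obtain ⟨ε, hε, hεU⟩ := Metric.isOpen_iff.1 hU x (hEU hx)
          refine ⟨min (ε / 2) (1 / ((k : ℝ) + 1)), fun _ => ⟨by positivity, min_le_right _ _, ?_⟩⟩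
          refine (closedBall_subset_ball ?_).trans hεU
          exact (min_le_left _ _).trans_lt (by linarith)
        · exact ⟨0, fun h => absurd h hx⟩
      choose r hr using hr
      obtain ⟨u, huE, hdisj, hcov⟩ := Vitali.exists_disjoint_subfamily_covering_enlargement_closedBall
        E (fun x => x) r (1 / ((k : ℝ) + 1)) (fun x hx => (hr x hx).2.1) 5 (by norm_num)
      have huc : u.Countable := by
        refine hdisj.countable_of_nonempty_interior fun x hx => ?_
        exact ⟨x, ball_subset_interior_closedBall (mem_ball_self (hr x (huE hx)).1)⟩
      refine ⟨u, r, huc, fun x hx => ⟨(hr x (huE hx)).1, (hr x (huE hx)).2.1⟩, ?_, ?_⟩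
      · intro x hx
        obtain ⟨b, hb, hsub⟩ := hcov x hx
        exact mem_iUnion.2 ⟨⟨b, hb⟩, hsub (mem_closedBall_self (hr x hx).1.le)⟩
      · have h1 : ∀ x : u, ENNReal.ofReal ((10 * r x) ^ d) ≤
            ENNReal.ofReal (10 ^ d / c) * ν (closedBall (x : X) (r x)) := by
          intro x
          have hx := hr x (huE x.2)
          have hk : 1 / ((k : ℝ) + 1) ≤ 1 := by
            rw [div_le_one (by positivity)]; linarith [(Nat.cast_nonneg k : (0 : ℝ) ≤ k)]
          calc ENNReal.ofReal ((10 * r x) ^ d)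
              = ENNReal.ofReal (10 ^ d / c) * ENNReal.ofReal (c * r x ^ d) := by
                rw [← ENNReal.ofReal_mul (by positivity), Real.mul_rpow (by norm_num) hx.1.le]
                congr 1; field_simp
            _ ≤ _ := by
                gcongr
                exact h x (huE x.2) _ hx.1 (hx.2.1.trans hk)
        refine (ENNReal.tsum_le_tsum h1).trans ?_
        rw [ENNReal.tsum_mul_left]
        gcongr
        have := huc.to_subtype
        rw [← measure_iUnion]
        · exact measure_mono (iUnion_subset fun x => (hr x (huE x.2)).2.2)
        · intro x y hxy
          exact hdisj x.2 y.2 (fun h => hxy (Subtype.ext h))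
        · exact fun x => isClosed_closedBall.measurableSet
    choose u r huc hur hcov hsum using step
    have : ∀ k, Countable (u k) := fun k => (huc k).to_subtype
    have hdiam : ∀ k (x : u k), Metric.ediam (closedBall (x : X) (5 * r k x)) ≤
        ENNReal.ofReal (10 * r k x) := by
      intro k x
      refine Metric.ediam_le fun y hy z hz => ?_
      rw [edist_dist]
      apply ENNReal.ofReal_le_ofReal
      have := dist_triangle_right y z (x : X)
      rw [mem_closedBall] at hy hz
      linarith
    refine (Measure.hausdorffMeasure_le_liminf_tsum (ι := fun k => u k) d E (l := Filter.atTop)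
      (fun k : ℕ => ENNReal.ofReal (10 * (1 / ((k : ℝ) + 1)))) ?_
      (fun k x => closedBall (x : X) (5 * r k x)) ?_ ?_).trans ?_
    · rw [← ENNReal.ofReal_zero]
      apply ENNReal.tendsto_ofReal
      simpa using (tendsto_one_div_add_atTop_nhds_zero_nat (𝕜 := ℝ)).const_mul 10
    · refine Filter.Eventually.of_forall fun k x => (hdiam k x).trans ?_
      apply ENNReal.ofReal_le_ofReal
      have := (hur k x x.2).2
      linarith
    · exact Filter.Eventually.of_forall fun k => hcov k
    · refine (Filter.liminf_le_liminf (v := fun _ : ℕ => ENNReal.ofReal (10 ^ d / c) * ν U)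
        (Filter.Eventually.of_forall fun k => ?_)).trans (by simp)
      refine le_trans (ENNReal.tsum_le_tsum fun x => ?_) (hsum k)
      rw [← ENNReal.ofReal_rpow_of_nonneg (by linarith [(hur k x x.2).1]) hd]
      exact ENNReal.rpow_le_rpow (hdiam k x) hd
  rw [Set.measure_eq_iInf_isOpen E ν, ENNReal.mul_iInf_of_ne (by positivity) hC0]
  refine le_iInf fun U => ?_
  by_cases hEU : E ⊆ U
  · by_cases hU : IsOpen U
    · simpa [hEU, hU] using key U hEU hU
    · simp only [hEU, hU, iInf_pos, iInf_false]
      rw [ENNReal.mul_top (by positivity)]; exact le_top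
  · rw [iInf_neg hEU, ENNReal.mul_top (by positivity)]; exact le_top

/-- Upper density bounds give a lower bound on Hausdorff measure. -/
lemma le_hausdorff_of_upper {X : Type*} [MetricSpace X]
    [MeasurableSpace X] [BorelSpace X] (ν : Measure X) (d : ℝ) (hd : 0 < d)
    (C : ℝ≥0) (hC : C ≠ 0)
    (h : ∀ s : Set X, ∀ δ : ℝ, 0 < δ → δ ≤ 1 → Metric.ediam s ≤ ENNReal.ofReal δ →
      ν s ≤ C * ENNReal.ofReal (δ ^ d)) :
    ν ≤ (C : ℝ≥0∞) • μH[d] := by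
  have hC' : (C : ℝ≥0∞) ≠ 0 := by simpa using hC
  have : (C : ℝ≥0∞)⁻¹ • ν ≤ μH[d] := by
    refine Measure.le_hausdorffMeasure d _ (ENNReal.ofReal (1 / 2)) (by simp) fun s hs => ?_
    have hfin : Metric.ediam s ≠ ∞ := (hs.trans_lt ENNReal.ofReal_lt_top).ne
    set D := (Metric.ediam s).toReal with hD
    have hsD : Metric.ediam s = ENNReal.ofReal D := (ENNReal.ofReal_toReal hfin).symm
    have hD0 : 0 ≤ D := ENNReal.toReal_nonneg
    have hD1 : D ≤ 1 / 2 := by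
      rw [hsD] at hs
      exact (ENNReal.ofReal_le_ofReal_iff (by norm_num)).1 hs
    rw [hsD, ENNReal.ofReal_rpow_of_nonneg hD0 hd.le]
    have hlim : Filter.Tendsto (fun δ : ℝ => ENNReal.ofReal (δ ^ d)) (nhdsWithin D (Ioi D))
        (nhds (ENNReal.ofReal (D ^ d))) := by
      apply ENNReal.tendsto_ofReal
      exact ((Real.continuous_rpow_const hd.le).tendsto D).mono_left nhdsWithin_le_nhds
    refine ge_of_tendsto hlim ?_
    have : Ioo D 1 ∈ nhdsWithin D (Ioi D) := Ioo_mem_nhdsGT (by linarith)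
    filter_upwards [this] with δ hδ
    have := h s δ (hD0.trans_lt hδ.1) hδ.2.le (hsD ▸ ENNReal.ofReal_le_ofReal hδ.1.le)
    rw [Measure.smul_apply, smul_eq_mul, ENNReal.inv_mul_le_iff hC' ENNReal.coe_ne_top]
    exact this
  intro s
  have := this s
  rw [Measure.smul_apply, smul_eq_mul, ENNReal.inv_mul_le_iff hC' ENNReal.coe_ne_top] at this
  simpa using this

lemma tube_lower {W : Type*} [NormedAddCommGroup W] [NormedSpace ℝ W] [FiniteDimensional ℝ W]
    [MeasurableSpace W] [BorelSpace W] (μ : Measure W) [μ.IsAddHaarMeasure] (γ : ℝ → W)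
    (c α β ρ : ℝ) (hc : 0 < c) (hαβ : α ≤ β) (hρ : 0 < ρ)
    (hγ : ∀ s ∈ Icc α β, ∀ t ∈ Icc α β, c * |s - t| ≤ dist (γ s) (γ t))
    (T : Set W) (hT : ∀ s ∈ Icc α β, closedBall (γ s) ρ ⊆ T) :
    ENNReal.ofReal ((β - α) * c / (3 * ρ) * ρ ^ (Module.finrank ℝ W)) * μ (ball 0 1) ≤ μ T := by
  set h := 3 * ρ / c with hh
  have hh0 : 0 < h := by positivity
  set M := ⌊(β - α) / h⌋₊ + 1 with hM
  have hmem : ∀ k ∈ Finset.range M, α + k * h ∈ Icc α β := by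
    intro k hk
    have hk1 : k ≤ ⌊(β - α) / h⌋₊ := by simpa [hM, Nat.lt_succ_iff] using hk
    have hk2 : (k : ℝ) ≤ (β - α) / h :=
      (Nat.cast_le.2 hk1).trans (Nat.floor_le (by have := sub_nonneg.2 hαβ; positivity))
    rw [le_div_iff₀ hh0] at hk2
    constructor
    · have : 0 ≤ k * h := by positivity
      linarith
    · linarith
  have hdisj : (Finset.range M : Set ℕ).PairwiseDisjoint
      fun k : ℕ => closedBall (γ (α + k * h)) ρ := by
    intro k hk l hl hkl
    apply closedBall_disjoint_closedBall
    have := hγ _ (hmem k hk) _ (hmem l hl)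
    have hkl1 : (1 : ℝ) ≤ |(k : ℝ) - l| := by
      have : (1 : ℤ) ≤ |(k : ℤ) - l| := Int.one_le_abs (by
        intro h; exact hkl (by omega))
      exact_mod_cast this
    have e : α + k * h - (α + l * h) = (k - l) * h := by ring
    rw [e, abs_mul, abs_of_pos hh0] at this
    have e2 : c * (|(k : ℝ) - l| * h) = |(k : ℝ) - l| * (3 * ρ) := by
      rw [hh]; field_simp
    nlinarith
  calc _ ≤ ENNReal.ofReal (M * ρ ^ (Module.finrank ℝ W)) * μ (ball 0 1) := by
        gcongr
        have : (β - α) * c / (3 * ρ) = (β - α) / h := by rw [hh]; field_simp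
        rw [this, hM]
        push_cast
        exact (Nat.lt_floor_add_one _).le
    _ = ∑ k ∈ Finset.range M, μ (closedBall (γ (α + k * h)) ρ) := by
        simp_rw [Measure.addHaar_closedBall μ _ hρ.le]
        rw [Finset.sum_const, Finset.card_range, nsmul_eq_mul, ENNReal.ofReal_mul (by positivity),
          ENNReal.ofReal_natCast, mul_assoc]
    _ = μ (⋃ k ∈ Finset.range M, closedBall (γ (α + k * h)) ρ) := by
        rw [measure_biUnion_finset hdisj fun _ _ => isClosed_closedBall.measurableSet]
    _ ≤ μ T := measure_mono (iUnion₂_subset fun k hk => hT _ (hmem k hk))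

lemma tube_upper {W : Type*} [NormedAddCommGroup W] [NormedSpace ℝ W] [FiniteDimensional ℝ W]
    [MeasurableSpace W] [BorelSpace W] (μ : Measure W) [μ.IsAddHaarMeasure] (γ : ℝ → W)
    (L α β ρ : ℝ) (hL : 0 ≤ L) (hαβ : α ≤ β) (hρ : 0 < ρ) (hρ1 : ρ ≤ 1)
    (hγ : ∀ s ∈ Icc α β, ∀ t ∈ Icc α β, dist (γ s) (γ t) ≤ L * |s - t|)
    (T : Set W) (hT : ∀ w ∈ T, ∃ s ∈ Icc α β, dist w (γ s) ≤ ρ) :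
    μ T ≤ ENNReal.ofReal ((β - α + 1) / ρ * ((1 + L) * ρ) ^ (Module.finrank ℝ W)) *
      μ (ball 0 1) := by
  set M := ⌊(β - α) / ρ⌋₊ + 1 with hM
  have hnn : 0 ≤ (β - α) / ρ := by have := sub_nonneg.2 hαβ; positivity
  have hcov : T ⊆ ⋃ k ∈ Finset.range M, closedBall (γ (α + k * ρ)) ((1 + L) * ρ) := by
    intro w hw
    obtain ⟨s, hs, hws⟩ := hT w hw
    have hs0 : 0 ≤ (s - α) / ρ := by have := sub_nonneg.2 hs.1; positivity
    set k := ⌊(s - α) / ρ⌋₊ with hk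
    have hk1 : (k : ℝ) ≤ (s - α) / ρ := Nat.floor_le hs0
    have hk2 : (s - α) / ρ < k + 1 := Nat.lt_floor_add_one _
    rw [le_div_iff₀ hρ] at hk1
    rw [div_lt_iff₀ hρ] at hk2
    have hkM : k ∈ Finset.range M := by
      rw [Finset.mem_range, hM, Nat.lt_succ_iff]
      apply Nat.floor_le_floor
      gcongr
      exact hs.2
    refine mem_iUnion₂.2 ⟨k, hkM, ?_⟩
    have hkρ : 0 ≤ k * ρ := by positivity
    have h1 := hγ s hs (α + k * ρ) ⟨by linarith, by linarith [hs.2]⟩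
    have h2 : |s - (α + k * ρ)| ≤ ρ := by rw [abs_le]; constructor <;> linarith
    rw [mem_closedBall]
    calc dist w (γ (α + k * ρ)) ≤ dist w (γ s) + dist (γ s) (γ (α + k * ρ)) := dist_triangle _ _ _
      _ ≤ ρ + L * ρ := by
        have := mul_le_mul_of_nonneg_left h2 hL
        linarith
      _ = _ := by ring
  calc μ T ≤ ∑ k ∈ Finset.range M, μ (closedBall (γ (α + k * ρ)) ((1 + L) * ρ)) :=
        (measure_mono hcov).trans (measure_biUnion_finset_le _ _)
    _ = ENNReal.ofReal (M * ((1 + L) * ρ) ^ (Module.finrank ℝ W)) * μ (ball 0 1) := by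
        simp_rw [Measure.addHaar_closedBall μ _ (by positivity : 0 ≤ (1 + L) * ρ)]
        rw [Finset.sum_const, Finset.card_range, nsmul_eq_mul, ENNReal.ofReal_mul (by positivity),
          ENNReal.ofReal_natCast, mul_assoc]
    _ ≤ _ := by
        gcongr
        rw [hM, add_div]
        push_cast
        have := Nat.floor_le hnn
        have : 1 ≤ 1 / ρ := by rw [le_div_iff₀ hρ]; linarith
        linarith

lemma rpow_lip_ge_one (n : ℕ) (a : ℝ) (ha : 1 ≤ a) (han : a ≤ n) (u v : ℝ)
    (hu : u ∈ Icc (0 : ℝ) 2) (hv : v ∈ Icc (0 : ℝ) 2) :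
    |u ^ a - v ^ a| ≤ n * 2 ^ n * |u - v| := by
  have := (convex_Icc (0 : ℝ) 2).norm_image_sub_le_of_norm_hasDerivWithin_le
    (f := fun x : ℝ => x ^ a) (f' := fun x => a * x ^ (a - 1)) (C := n * 2 ^ n)
    (fun x hx => (Real.hasDerivAt_rpow_const (Or.inr ha)).hasDerivWithinAt)
    (fun x hx => ?_) hv hu
  · simpa using this
  · have h0 : 0 ≤ x ^ (a - 1) := Real.rpow_nonneg hx.1 _
    rw [Real.norm_eq_abs, abs_of_nonneg (by positivity)]
    have h1 : x ^ (a - 1) ≤ 2 ^ n := by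
      calc x ^ (a - 1) ≤ 2 ^ (a - 1) := Real.rpow_le_rpow hx.1 hx.2 (by linarith)
        _ ≤ 2 ^ (n : ℝ) := Real.rpow_le_rpow_of_exponent_le (by norm_num) (by linarith)
        _ = 2 ^ n := Real.rpow_natCast _ _
    gcongr

lemma rpow_lip_le_one (p : ℝ) (hp : 0 < p) (hp1 : p ≤ 1) (u v : ℝ)
    (hu : u ∈ Icc (1 / 2 : ℝ) 2) (hv : v ∈ Icc (1 / 2 : ℝ) 2) :
    |u ^ p - v ^ p| ≤ 2 * |u - v| := by
  have := (convex_Icc (1 / 2 : ℝ) 2).norm_image_sub_le_of_norm_hasDerivWithin_le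
    (f := fun x : ℝ => x ^ p) (f' := fun x => p * x ^ (p - 1)) (C := 2)
    (fun x hx => (Real.hasDerivAt_rpow_const (Or.inl (by linarith [hx.1]))).hasDerivWithinAt)
    (fun x hx => ?_) hv hu
  · simpa using this
  · have hx0 : 0 < x := by linarith [hx.1]
    have h0 : 0 ≤ x ^ (p - 1) := Real.rpow_nonneg hx0.le _
    rw [Real.norm_eq_abs, abs_of_nonneg (by positivity)]
    have h1 : x ^ (p - 1) ≤ 2 := by
      calc x ^ (p - 1) ≤ (1 / 2) ^ (p - 1) :=
            Real.rpow_le_rpow_of_nonpos (by norm_num) hx.1 (by linarith)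
        _ ≤ (1 / 2) ^ (-1 : ℝ) :=
            Real.rpow_le_rpow_of_exponent_ge (by norm_num) (by norm_num) (by linarith)
        _ = 2 := by rw [Real.rpow_neg_one]; norm_num
    calc p * x ^ (p - 1) ≤ 1 * 2 := by gcongr
      _ = 2 := by ring

lemma rpow_inv_lip (p : ℝ) (hp : 0 < p) (hp1 : p ≤ 1) (u v : ℝ)
    (hu : u ∈ Icc (1 / 2 : ℝ) 1) (hv : v ∈ Icc (1 / 2 : ℝ) 1) :
    |u⁻¹ ^ p - v⁻¹ ^ p| ≤ 8 * |u - v| := by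
  have aux : ∀ z ∈ Icc (1 / 2 : ℝ) 1, z⁻¹ ∈ Icc (1 / 2 : ℝ) 2 := by
    intro z hz
    have hz0 : 0 < z := by linarith [hz.1]
    constructor
    · rw [le_inv_comm₀ (by norm_num) hz0]; linarith [hz.2]
    · rw [inv_le_comm₀ hz0 (by norm_num)]; linarith [hz.1]
  have h := rpow_lip_le_one p hp hp1 _ _ (aux u hu) (aux v hv)
  have hu0 : 0 < u := by linarith [hu.1]
  have hv0 : 0 < v := by linarith [hv.1]
  have e : u⁻¹ - v⁻¹ = u⁻¹ * v⁻¹ * (v - u) := by field_simp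
  rw [e, abs_mul, abs_of_pos (by positivity : 0 < u⁻¹ * v⁻¹), abs_sub_comm v u] at h
  have : u⁻¹ * v⁻¹ ≤ 2 * 2 := by
    have h1 := (aux u hu).2
    have h2 := (aux v hv).2
    gcongr
  nlinarith [abs_nonneg (u - v)]

lemma rpow_lower (p : ℝ) (hp : 0 < p) (hp1 : p ≤ 1) (u v : ℝ)
    (hu : u ∈ Ioc (0 : ℝ) 1) (hv : v ∈ Ioc (0 : ℝ) 1) :
    p * |u - v| ≤ |u ^ p - v ^ p| := by
  wlog huv : u ≤ v generalizing u v
  · rw [abs_sub_comm u v, abs_sub_comm (u ^ p)]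
    exact this v u hv hu (le_of_not_ge huv)
  have hm : u ^ p ≤ v ^ p := Real.rpow_le_rpow hu.1.le huv hp.le
  rw [abs_sub_comm, abs_of_nonneg (sub_nonneg.2 huv), abs_sub_comm, abs_of_nonneg (sub_nonneg.2 hm)]
  have hv0 := hv.1
  have hu0 := hu.1
  have hb : (u / v) ^ p ≤ 1 + p * (u / v - 1) := by
    have := rpow_one_add_le_one_add_mul_self (s := u / v - 1) (p := p)
      (by have : 0 < u / v := by positivity
          linarith) hp.le hp1
    simpa using this
  rw [Real.div_rpow hu0.le hv0.le] at hb
  have hvp : v ≤ v ^ p := by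
    simpa using Real.rpow_le_rpow_of_exponent_ge hv0 hv.2 hp1
  have hvp0 : 0 < v ^ p := by positivity
  rw [div_le_iff₀ hvp0] at hb
  have e : (1 + p * (u / v - 1)) * v ^ p = v ^ p - p * (v - u) * (v ^ p / v) := by
    field_simp; ring
  have : 1 ≤ v ^ p / v := by rwa [one_le_div hv0]
  have h2 : 0 ≤ p * (v - u) := mul_nonneg hp.le (by linarith)
  nlinarith

section cone
variable {n m : ℕ}

def Phi (a : Fin m → ℝ) (w : Fin m → Rn n) : ℝ := ∑ j, ‖w j‖ ^ (a j)

def dil (a : Fin m → ℝ) (s : ℝ) (w : Fin m → Rn n) : Fin m → Rn n :=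
  fun j => s ^ (1 / a j) • w j

def prj (a : Fin m → ℝ) (w : Fin m → Rn n) : Fin m → Rn n := dil a (Phi a w)⁻¹ w

def shell (n : ℕ) {m : ℕ} (a : Fin m → ℝ) : Set (Fin m → Rn n) := {w | 1 / 2 < Phi a w ∧ Phi a w ≤ 1}

def coneM (n : ℕ) {m : ℕ} (a : Fin m → ℝ) : Measure (Fin m → Rn n) :=
  (volume.restrict (shell n a)).map (prj a)

lemma measurable_Phi (a : Fin m → ℝ) : Measurable (Phi (n := n) a) := by
  unfold Phi; fun_prop

lemma measurable_prj (a : Fin m → ℝ) : Measurable (prj (n := n) a) := by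
  have := measurable_Phi (n := n) a
  unfold prj dil
  fun_prop

lemma measurableSet_shell (a : Fin m → ℝ) : MeasurableSet (shell n a) :=
  (measurable_Phi a) measurableSet_Ioc

lemma Phi_dil (a : Fin m → ℝ) (ha : ∀ j, 1 ≤ a j) (s : ℝ) (hs : 0 ≤ s) (w : Fin m → Rn n) :
    Phi a (dil a s w) = s * Phi a w := by
  unfold Phi dil
  rw [Finset.mul_sum]
  refine Finset.sum_congr rfl fun j _ => ?_
  have : a j ≠ 0 := by linarith [ha j]
  rw [norm_smul, Real.norm_eq_abs, abs_of_nonneg (Real.rpow_nonneg hs _),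
    Real.mul_rpow (Real.rpow_nonneg hs _) (norm_nonneg _), ← Real.rpow_mul hs,
    one_div_mul_cancel this, Real.rpow_one]

lemma dil_prj (a : Fin m → ℝ) (w : Fin m → Rn n) (hw : 0 < Phi a w) :
    dil a (Phi a w) (prj a w) = w := by
  funext j
  unfold prj dil
  rw [smul_smul, ← Real.mul_rpow hw.le (by positivity), mul_inv_cancel₀ hw.ne', Real.one_rpow,
    one_smul]

lemma prj_mem (a : Fin m → ℝ) (ha : ∀ j, 1 ≤ a j) (w : Fin m → Rn n) (hw : 0 < Phi a w) :
    Phi a (prj a w) = 1 := by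
  rw [prj, Phi_dil a ha _ (by positivity), inv_mul_cancel₀ hw.ne']

lemma norm_le_one_of_Phi (a : Fin m → ℝ) (ha : ∀ j, 1 ≤ a j) (w : Fin m → Rn n)
    (hw : Phi a w ≤ 1) (j : Fin m) : ‖w j‖ ≤ 1 := by
  by_contra! h
  have h1 : ‖w j‖ ^ (a j) ≤ Phi a w :=
    Finset.single_le_sum (f := fun j => ‖w j‖ ^ (a j))
      (fun i _ => Real.rpow_nonneg (norm_nonneg _) _) (Finset.mem_univ j)
  have h2 := Real.one_lt_rpow h (by linarith [ha j] : 0 < a j)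
  linarith

instance finite_cone (a : Fin m → ℝ) [hf : Fact (∀ j, 1 ≤ a j)] : IsFiniteMeasure (coneM n a) := by
  have : volume (shell n a) < ∞ := by
    refine (measure_mono ?_).trans_lt (measure_closedBall_lt_top (x := (0 : Fin m → Rn n)) (r := 1))
    intro w hw
    rw [mem_closedBall, dist_zero_right, pi_norm_le_iff_of_nonneg zero_le_one]
    exact norm_le_one_of_Phi a hf.out w hw.2
  have : IsFiniteMeasure (volume.restrict (shell n a)) := ⟨by simpa using this⟩
  unfold coneM
  infer_instance

lemma finrank_W : Module.finrank ℝ (Fin m → Rn n) = m * n := by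
  rw [Module.finrank_pi_fintype]; simp

lemma cone_density (hn : 1 ≤ n) (hm : 1 ≤ m) (a : Fin m → ℝ) (ha : ∀ j, 1 ≤ a j)
    (han : ∀ j, a j ≤ (n : ℝ)) : ∃ c : ℝ, 0 < c ∧ ∀ y : Fin m → Rn n, Phi a y = 1 →
    ∀ r, 0 < r → r ≤ 1 →
      ENNReal.ofReal (c * r ^ ((m : ℝ) * n - 1)) ≤ coneM n a (closedBall y r) := by
  have hn0 : (0 : ℝ) < n := by exact_mod_cast hn
  have hm0 : (0 : ℝ) < m := by exact_mod_cast hm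
  have hap : ∀ j, 0 < a j := fun j => by linarith [ha j]
  have hp0 : ∀ j, 0 < 1 / a j := fun j => by have := hap j; positivity
  have hp1 : ∀ j, 1 / a j ≤ 1 := fun j => by rw [div_le_one (hap j)]; exact ha j
  set L : ℝ := m * (n * 2 ^ n) with hL
  have hL0 : 0 < L := by positivity
  set c1 : ℝ := 1 / (2 + 8 * L) with hc1
  have hc10 : 0 < c1 := by positivity
  have hc1e : 2 * c1 + 8 * L * c1 = 1 := by rw [hc1]; field_simp
  set ω := (volume (ball (0 : Fin m → Rn n) 1)) with hω
  have hω0 : 0 < ω.toReal := ENNReal.toReal_pos (measure_ball_pos _ _ one_pos).ne'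
    measure_ball_lt_top.ne
  have hωe : ω = ENNReal.ofReal ω.toReal := (ENNReal.ofReal_toReal measure_ball_lt_top.ne).symm
  set c0 : ℝ := 1 / (n * m) with hc0
  have hc00 : 0 < c0 := by positivity
  refine ⟨(1 / 8) * c0 / (3 * c1) * c1 ^ (m * n) * ω.toReal, by positivity, ?_⟩
  intro y hy r hr hr1
  rw [coneM, Measure.map_apply (measurable_prj a) isClosed_closedBall.measurableSet,
    Measure.restrict_apply (measurable_prj a isClosed_closedBall.measurableSet)]
  have hy1 := norm_le_one_of_Phi a ha y hy.le
  have hdy : ∀ s : ℝ, 0 ≤ s → s ≤ 1 → ∀ j, ‖dil a s y j‖ ≤ 1 := by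
    intro s hs hs1 j
    apply norm_le_one_of_Phi a ha
    rw [Phi_dil a ha s hs, hy, mul_one]; exact hs1
  have key := tube_lower (volume : Measure (Fin m → Rn n)) (fun s => dil a s y) c0 (3 / 4) (7 / 8)
    (c1 * r) hc00 (by norm_num) (by positivity) ?_
    (prj a ⁻¹' closedBall y r ∩ shell n a) ?_
  · refine le_trans (le_of_eq ?_) key
    rw [finrank_W]
    conv_rhs => rw [← hω, hωe]
    rw [← ENNReal.ofReal_mul (by positivity)]
    congr 1
    rw [Real.rpow_sub_one hr.ne', ← Nat.cast_mul, Real.rpow_natCast, mul_pow]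
    field_simp
    ring
  · intro s hs t ht
    obtain ⟨j, hj⟩ : ∃ j, 1 / (m : ℝ) ≤ ‖y j‖ := by
      by_contra! hcon
      have : Phi a y < 1 := by
        have : Phi a y < ∑ j : Fin m, 1 / (m : ℝ) := by
          refine Finset.sum_lt_sum_of_nonempty ⟨⟨0, hm⟩, Finset.mem_univ _⟩ fun j _ => ?_
          refine lt_of_le_of_lt ?_ (hcon j)
          rcases eq_or_lt_of_le (norm_nonneg (y j)) with h0 | h0
          · rw [← h0, Real.zero_rpow (hap j).ne']
          · simpa using Real.rpow_le_rpow_of_exponent_ge h0 (hy1 j) (ha j)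
        simpa [hm0.ne'] using this
      linarith
    refine le_trans ?_ (dist_le_pi_dist _ _ j)
    simp only [dil]
    rw [dist_eq_norm, ← sub_smul, norm_smul, Real.norm_eq_abs]
    have h1 := rpow_lower (1 / a j) (hp0 j) (hp1 j) s t
      ⟨by linarith [hs.1], by linarith [hs.2]⟩ ⟨by linarith [ht.1], by linarith [ht.2]⟩
    have h2 : 1 / (n : ℝ) ≤ 1 / a j := one_div_le_one_div_of_le (hap j) (han j)
    calc c0 * |s - t| = (1 / n * |s - t|) * (1 / m) := by rw [hc0]; field_simp
      _ ≤ (1 / a j * |s - t|) * ‖y j‖ := by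
          have := (hp0 j).le
          have h3 : 0 ≤ 1 / a j * |s - t| := by positivity
          gcongr
      _ ≤ _ := by gcongr
  · intro s hs w hw
    rw [mem_closedBall] at hw
    have hs0 : 0 ≤ s := by linarith [hs.1]
    have hwj : ∀ j, ‖w j - dil a s y j‖ ≤ c1 * r := fun j => by
      rw [← dist_eq_norm]; exact (dist_le_pi_dist _ _ j).trans hw
    have hc1r : c1 * r ≤ c1 := by nlinarith
    have hLc : L * c1 ≤ 1 / 8 := by nlinarith
    have hc11 : c1 ≤ 1 := by nlinarith
    have hPhi : |Phi a w - s| ≤ L * c1 * r := by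
      have e : s = Phi a (dil a s y) := by rw [Phi_dil a ha s hs0, hy, mul_one]
      calc |Phi a w - s| = |∑ j, (‖w j‖ ^ a j - ‖dil a s y j‖ ^ a j)| := by
            conv_lhs => rw [e]
            rw [Phi, Phi, Finset.sum_sub_distrib]
        _ ≤ ∑ j, |‖w j‖ ^ a j - ‖dil a s y j‖ ^ a j| := Finset.abs_sum_le_sum_abs _ _
        _ ≤ ∑ j : Fin m, n * 2 ^ n * (c1 * r) := by
            refine Finset.sum_le_sum fun j _ => ?_
            have hd := hdy s hs0 (by linarith [hs.2]) j
            have hw2 : ‖w j‖ ≤ 2 := by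
              have := norm_le_norm_add_norm_sub' (w j) (dil a s y j)
              linarith [hwj j]
            refine (rpow_lip_ge_one n (a j) (ha j) (han j) _ _ ⟨norm_nonneg _, hw2⟩
              ⟨norm_nonneg _, by linarith⟩).trans ?_
            gcongr
            exact (abs_norm_sub_norm_le _ _).trans (hwj j)
        _ = L * c1 * r := by simp [hL]; ring
    have hPhi8 : |Phi a w - s| ≤ 1 / 8 := hPhi.trans (by nlinarith [mul_pos hL0 hc10])
    rw [abs_le] at hPhi8
    have hΦ1 : 1 / 2 ≤ Phi a w := by linarith [hs.1]
    have hΦ2 : Phi a w ≤ 1 := by linarith [hs.2]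
    refine ⟨?_, ?_, hΦ2⟩
    · rw [mem_preimage, mem_closedBall, dist_pi_le_iff hr.le]
      intro j
      have hsp : 0 < s := by linarith [hs.1]
      have e : y j = s⁻¹ ^ (1 / a j) • dil a s y j := by
        simp only [dil]
        rw [smul_smul, ← Real.mul_rpow (by positivity) hs0, inv_mul_cancel₀ hsp.ne', Real.one_rpow,
          one_smul]
      have e2 : prj a w j - y j = (Phi a w)⁻¹ ^ (1 / a j) • (w j - dil a s y j) +
          ((Phi a w)⁻¹ ^ (1 / a j) - s⁻¹ ^ (1 / a j)) • dil a s y j := by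
        conv_lhs => rw [e]
        rw [prj]
        simp only [dil]
        module
      rw [dist_eq_norm, e2]
      refine (norm_add_le _ _).trans ?_
      rw [norm_smul, norm_smul, Real.norm_eq_abs, Real.norm_eq_abs]
      have hA := rpow_inv_lip (1 / a j) (hp0 j) (hp1 j) (Phi a w) s ⟨hΦ1, hΦ2⟩
        ⟨by linarith [hs.1], by linarith [hs.2]⟩
      have hi1 : 1 ≤ (Phi a w)⁻¹ := (one_le_inv₀ (by linarith)).2 hΦ2
      have hi2 : (Phi a w)⁻¹ ≤ 2 := by
        rw [inv_le_comm₀ (by linarith) (by norm_num)]; linarith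
      have hB : |(Phi a w)⁻¹ ^ (1 / a j)| ≤ 2 := by
        rw [abs_of_nonneg (by positivity)]
        calc (Phi a w)⁻¹ ^ (1 / a j) ≤ (Phi a w)⁻¹ ^ (1 : ℝ) :=
              Real.rpow_le_rpow_of_exponent_le hi1 (hp1 j)
          _ ≤ 2 := by simpa using hi2
      calc _ ≤ 2 * (c1 * r) + (8 * (L * c1 * r)) * 1 := by
            gcongr
            · exact hwj j
            · exact hA.trans (by gcongr)
            · exact hdy s hs0 (by linarith [hs.2]) j
        _ = (2 * c1 + 8 * L * c1) * r := by ring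
        _ = r := by rw [hc1e, one_mul]
    · linarith [hs.1]

lemma hausdorff_le_cone (hn : 1 ≤ n) (hm : 1 ≤ m) (a : Fin m → ℝ) (ha : ∀ j, 1 ≤ a j)
    (han : ∀ j, a j ≤ (n : ℝ)) : ∃ C : ℝ≥0,
    (μH[((m : ℝ) * n - 1)]).restrict (Sm n m a) ≤ (C : ℝ≥0∞) • coneM n a := by
  obtain ⟨c, hc, h⟩ := cone_density hn hm a ha han
  have : Fact (∀ j, 1 ≤ a j) := ⟨ha⟩
  refine ⟨Real.toNNReal (10 ^ ((m : ℝ) * n - 1) / c), ?_⟩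
  refine Measure.le_iff.2 fun E hE => ?_
  rw [Measure.restrict_apply hE]
  have hn0 : (1 : ℝ) ≤ n := by exact_mod_cast hn
  have hm0 : (1 : ℝ) ≤ m := by exact_mod_cast hm
  refine (hausdorff_le_of_density (coneM n a) _ (by nlinarith) c hc (E ∩ Sm n m a)
    fun y hy => h y hy.2).trans ?_
  rw [Measure.smul_apply, smul_eq_mul]
  exact mul_le_mul_right (measure_mono inter_subset_left) _

lemma hausdorff_Sm_lt_top (hn : 1 ≤ n) (hm : 1 ≤ m) (a : Fin m → ℝ) (ha : ∀ j, 1 ≤ a j)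
    (han : ∀ j, a j ≤ (n : ℝ)) : μH[((m : ℝ) * n - 1)] (Sm n m a) < ∞ := by
  obtain ⟨C, hC⟩ := hausdorff_le_cone hn hm a ha han
  have : Fact (∀ j, 1 ≤ a j) := ⟨ha⟩
  have := hC univ
  simp only [Measure.restrict_apply_univ, Measure.smul_apply, smul_eq_mul] at this
  exact this.trans_lt (ENNReal.mul_lt_top ENNReal.coe_lt_top (measure_lt_top _ _))

lemma hausdorff_Sm_pos (hn : 2 ≤ n) (hm : 1 ≤ m) (a : Fin m → ℝ) (ha : ∀ j, 1 ≤ a j)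
    (han : ∀ j, a j ≤ (n : ℝ)) : 0 < μH[((m : ℝ) * n - 1)] (Sm n m a) := by
  have hn0 : (2 : ℝ) ≤ n := by exact_mod_cast hn
  have hm0 : (1 : ℝ) ≤ m := by exact_mod_cast hm
  have hap : ∀ j, 0 < a j := fun j => by linarith [ha j]
  have hp0 : ∀ j, 0 < 1 / a j := fun j => by have := hap j; positivity
  have hp1 : ∀ j, 1 / a j ≤ 1 := fun j => by rw [div_le_one (hap j)]; exact ha j
  set ω := (volume (ball (0 : Fin m → Rn n) 1)) with hω
  have hω0 : 0 < ω.toReal := ENNReal.toReal_pos (measure_ball_pos _ _ one_pos).ne'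
    measure_ball_lt_top.ne
  have hωe : ω = ENNReal.ofReal ω.toReal := (ENNReal.ofReal_toReal measure_ball_lt_top.ne).symm
  have hC0 : 0 < (3 / 2) * 3 ^ (m * n) * ω.toReal := by positivity
  have hle : coneM n a ≤ ((Real.toNNReal ((3 / 2) * 3 ^ (m * n) * ω.toReal) : ℝ≥0) : ℝ≥0∞) •
      μH[((m : ℝ) * n - 1)] := by
    refine le_hausdorff_of_upper _ _ (by nlinarith) _ (by simpa using hC0) ?_
    intro s δ hδ hδ1 hs
    rw [← Metric.ediam_closure] at hs
    refine (measure_mono (subset_closure (s := s))).trans ?_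
    rw [coneM, Measure.map_apply (measurable_prj a) isClosed_closure.measurableSet,
      Measure.restrict_apply (measurable_prj a isClosed_closure.measurableSet)]
    rcases (prj a ⁻¹' closure s ∩ shell n a).eq_empty_or_nonempty with he | ⟨w0, hw0, hw0'⟩
    · rw [he]; simp
    have hw0p : 0 < Phi a w0 := by linarith [hw0'.1]
    set y := prj a w0 with hy
    have hyΦ : Phi a y = 1 := prj_mem a ha w0 hw0p
    have hy1 := norm_le_one_of_Phi a ha y hyΦ.le
    have key := tube_upper (volume : Measure (Fin m → Rn n)) (fun s => dil a s y) 2 (1 / 2) 1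
      δ (by norm_num) (by norm_num) hδ hδ1 ?_
      (prj a ⁻¹' closure s ∩ shell n a) ?_
    · refine key.trans (le_of_eq ?_)
      rw [finrank_W]
      conv_lhs => rw [← hω, hωe]
      rw [← ENNReal.ofReal_mul (by positivity)]
      change _ = ENNReal.ofReal _ * _
      rw [← ENNReal.ofReal_mul (by positivity)]
      congr 1
      rw [Real.rpow_sub_one hδ.ne', ← Nat.cast_mul, Real.rpow_natCast, mul_pow]
      field_simp
      ring
    · intro s hs t ht
      rw [dist_pi_le_iff (by positivity)]
      intro j
      simp only [dil]
      rw [dist_eq_norm, ← sub_smul, norm_smul, Real.norm_eq_abs]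
      have h1 := rpow_lip_le_one (1 / a j) (hp0 j) (hp1 j) s t
        ⟨by linarith [hs.1], by linarith [hs.2]⟩ ⟨by linarith [ht.1], by linarith [ht.2]⟩
      calc _ ≤ (2 * |s - t|) * 1 := by gcongr; exact hy1 j
        _ = _ := by ring
    · intro w hw
      have hwp : 0 < Phi a w := by linarith [hw.2.1]
      refine ⟨Phi a w, ⟨hw.2.1.le, hw.2.2⟩, ?_⟩
      have h1 : dist (prj a w) y ≤ δ := by
        have := (Metric.edist_le_ediam_of_mem (mem_preimage.1 hw.1) (mem_preimage.1 hw0)).trans hs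
        rwa [edist_dist, ENNReal.ofReal_le_ofReal_iff hδ.le] at this
      rw [dist_pi_le_iff hδ.le]
      intro j
      have ew : w j = Phi a w ^ (1 / a j) • prj a w j := (congrFun (dil_prj a w hwp) j).symm
      conv_lhs => rw [ew]
      simp only [dil]
      rw [dist_eq_norm, ← smul_sub, norm_smul, Real.norm_eq_abs, abs_of_nonneg (by positivity)]
      have h2 : Phi a w ^ (1 / a j) ≤ 1 := Real.rpow_le_one hwp.le hw.2.2 (hp0 j).le
      have h3 := (dist_le_pi_dist (prj a w) y j).trans h1
      rw [dist_eq_norm] at h3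
      calc _ ≤ 1 * δ := by gcongr
        _ = δ := one_mul _
  have hcone : coneM n a (Sm n m a)ᶜ = 0 := by
    have hmeas : MeasurableSet (Sm n m a) := (measurable_Phi a) (measurableSet_singleton 1)
    rw [coneM, Measure.map_apply (measurable_prj a) hmeas.compl,
      Measure.restrict_apply (measurable_prj a hmeas.compl)]
    convert measure_empty (μ := (volume : Measure (Fin m → Rn n)))
    refine eq_empty_of_forall_notMem fun w hw => hw.1 ?_
    exact prj_mem a ha w (by linarith [hw.2.1])
  have huniv : 0 < coneM n a univ := by
    obtain ⟨c, hc, h⟩ := cone_density (by omega) hm a ha han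
    let y : Fin m → Rn n := Pi.single ⟨0, hm⟩ (EuclideanSpace.single ⟨0, by omega⟩ 1)
    have hy : Phi a y = 1 := by
      unfold Phi
      rw [Finset.sum_eq_single (⟨0, hm⟩ : Fin m)]
      · simp [y]
      · intro j _ hj
        simp [y, hj, (hap j).ne']
      · simp
    have := h y hy 1 one_pos le_rfl
    refine lt_of_lt_of_le ?_ (this.trans (measure_mono (subset_univ _)))
    simpa using hc
  by_contra! hcon
  have h0 : μH[((m : ℝ) * n - 1)] (Sm n m a) = 0 := le_antisymm hcon bot_le
  have h1 : coneM n a (Sm n m a) = 0 := by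
    refine le_antisymm ((hle _).trans ?_) bot_le
    rw [Measure.smul_apply, h0]; simp
  have h2 : coneM n a univ ≤ 0 := by
    rw [← union_compl_self (Sm n m a)]
    refine (measure_union_le _ _).trans ?_
    rw [h1, hcone]; simp
  exact absurd huniv (not_lt.2 h2)

end cone

lemma hausdorff_sphere_lt_top (n : ℕ) (hn : 2 ≤ n) :
    μH[((n : ℝ) - 1)] (sphere (0 : Rn n) 1) < ∞ := by
  have hn0 : (2 : ℝ) ≤ n := by exact_mod_cast hn
  have h := hausdorff_Sm_lt_top (n := n) (m := 1) (by omega) le_rfl (fun _ => 1) (fun _ => le_rfl)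
    (fun _ => by linarith)
  have e : ((1 : ℕ) : ℝ) * n - 1 = (n : ℝ) - 1 := by push_cast; ring
  rw [e] at h
  have hl : LipschitzWith 1 (fun y : Fin 1 → Rn n => y 0) := LipschitzWith.eval 0
  have h2 := hl.hausdorffMeasure_image_le (d := (n : ℝ) - 1) (by linarith) (Sm n 1 fun _ => 1)
  simp only [ENNReal.coe_one, ENNReal.one_rpow, one_mul] at h2
  refine (measure_mono ?_).trans_lt (h2.trans_lt h)
  intro x hx
  refine ⟨fun _ => x, ?_, rfl⟩
  simpa [Sm] using hx

def sphM (n : ℕ) : Measure (Rn n) :=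
  ((volume : Measure (Rn n)).toSphere).map Subtype.val

open scoped Pointwise in
lemma sphM_le_hausdorff (n : ℕ) (hn : 2 ≤ n) :
    ∃ C : ℝ≥0, sphM n ≤ (C : ℝ≥0∞) • μH[((n : ℝ) - 1)] := by
  have hn0 : (2 : ℝ) ≤ n := by exact_mod_cast hn
  set ω := (volume (ball (0 : Rn n) 1)) with hω
  have hω0 : 0 < ω.toReal := ENNReal.toReal_pos (measure_ball_pos _ _ one_pos).ne'
    measure_ball_lt_top.ne
  have hωe : ω = ENNReal.ofReal ω.toReal := (ENNReal.ofReal_toReal measure_ball_lt_top.ne).symm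
  have hC0 : 0 < n * (2 * 2 ^ n * ω.toReal) := by positivity
  refine ⟨Real.toNNReal (n * (2 * 2 ^ n * ω.toReal)), ?_⟩
  refine le_hausdorff_of_upper _ _ (by linarith) _ (by simpa using hC0) ?_
  intro s δ hδ hδ1 hs
  rw [← Metric.ediam_closure] at hs
  refine (measure_mono (subset_closure (s := s))).trans ?_
  have hms : MeasurableSet ((Subtype.val : sphere (0 : Rn n) 1 → Rn n) ⁻¹' closure s) :=
    measurable_subtype_coe isClosed_closure.measurableSet
  rw [sphM, Measure.map_apply measurable_subtype_coe isClosed_closure.measurableSet,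
    Measure.toSphere_apply' _ hms]
  rcases ((Subtype.val : sphere (0 : Rn n) 1 → Rn n) ⁻¹' closure s).eq_empty_or_nonempty with
    he | ⟨x, hx⟩
  · rw [he]; simp
  have key := tube_upper (volume : Measure (Rn n)) (fun t => t • (x : Rn n)) 1 0 1
      δ (by norm_num) (by norm_num) hδ hδ1 ?_
      (Ioo (0 : ℝ) 1 • (Subtype.val '' (Subtype.val ⁻¹' closure s : Set (sphere (0 : Rn n) 1)))) ?_
  · refine (mul_le_mul_right key _).trans (le_of_eq ?_)
    have hfr : Module.finrank ℝ (Rn n) = n := by simp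
    rw [hfr]
    conv_lhs => rw [← hω, hωe]
    rw [← ENNReal.ofReal_mul (by positivity)]
    change _ = ENNReal.ofReal _ * _
    rw [← ENNReal.ofReal_mul (by positivity), ← ENNReal.ofReal_natCast n,
      ← ENNReal.ofReal_mul (by positivity)]
    congr 1
    rw [Real.rpow_sub_one hδ.ne', Real.rpow_natCast, mul_pow]
    field_simp
    norm_num
  · intro s hs t ht
    rw [dist_eq_norm, ← sub_smul, norm_smul, Real.norm_eq_abs]
    have : ‖(x : Rn n)‖ = 1 := by simpa using x.2
    rw [this, mul_one, one_mul]
  · rintro w ⟨t, ht, y, ⟨y', hy', rfl⟩, rfl⟩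
    refine ⟨t, ⟨ht.1.le, ht.2.le⟩, ?_⟩
    have h1 : dist (y' : Rn n) x ≤ δ := by
      have := (Metric.edist_le_ediam_of_mem (mem_preimage.1 hy') (mem_preimage.1 hx)).trans hs
      rwa [edist_dist, ENNReal.ofReal_le_ofReal_iff hδ.le] at this
    simp only
    rw [dist_eq_norm, ← smul_sub, norm_smul, Real.norm_eq_abs, abs_of_pos ht.1]
    rw [dist_eq_norm] at h1
    calc _ ≤ 1 * δ := by gcongr; exact ht.2.le
      _ = δ := one_mul _

lemma sphM_le_μSph (n : ℕ) (hn : 2 ≤ n) :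
    ∃ C : ℝ≥0, sphM n ≤ (C : ℝ≥0∞) • μSph n := by
  obtain ⟨C, hC⟩ := sphM_le_hausdorff n hn
  have hfin := hausdorff_sphere_lt_top n hn
  set A := μH[((n : ℝ) - 1)] (sphere (0 : Rn n) 1) with hA
  refine ⟨C * A.toNNReal, Measure.le_iff.2 fun E hE => ?_⟩
  have h1 : sphM n E = sphM n (E ∩ sphere 0 1) := by
    rw [sphM, Measure.map_apply measurable_subtype_coe hE,
      Measure.map_apply measurable_subtype_coe (hE.inter isClosed_sphere.measurableSet)]
    congr 1
    ext x
    simp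
  rw [h1]
  refine (hC _).trans ?_
  simp only [μSph, Measure.smul_apply, smul_eq_mul]
  rw [Measure.restrict_apply hE, ← hA, ENNReal.coe_mul, ENNReal.coe_toNNReal hfin.ne]
  by_cases h0 : A = 0
  · have : μH[((n : ℝ) - 1)] (E ∩ sphere (0 : Rn n) 1) = 0 :=
      measure_mono_null inter_subset_right h0
    rw [this]; simp
  · rw [mul_assoc, ← mul_assoc A, ENNReal.mul_inv_cancel h0 hfin.ne, one_mul]

lemma polar (n : ℕ) (hn : 2 ≤ n) (G : Rn n → ℝ≥0∞) (hG : Measurable G) :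
    ∫⁻ v, G v = ∫⁻ u in Ioi (0 : ℝ), ENNReal.ofReal (u ^ (n - 1)) *
      ∫⁻ θ, G (u • θ) ∂(sphM n) := by
  have : Nontrivial (Rn n) := by
    have : Nonempty (Fin n) := ⟨⟨0, by omega⟩⟩
    infer_instance
  have hfr : Module.finrank ℝ (Rn n) = n := by simp
  have hp := (volume : Measure (Rn n)).measurePreserving_homeomorphUnitSphereProd
  rw [hfr] at hp
  calc ∫⁻ v, G v = ∫⁻ v in ({0}ᶜ : Set (Rn n)), G v := by
        rw [restrict_compl_singleton]
    _ = ∫⁻ v : ({0}ᶜ : Set (Rn n)), G v ∂(volume.comap Subtype.val) :=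
        (lintegral_subtype_comap (measurableSet_singleton _).compl G).symm
    _ = ∫⁻ v : ({0}ᶜ : Set (Rn n)), (fun z : sphere (0 : Rn n) 1 × Ioi (0 : ℝ) =>
          G ((z.2 : ℝ) • (z.1 : Rn n))) (homeomorphUnitSphereProd (Rn n) v) ∂(volume.comap Subtype.val) := by
        refine lintegral_congr fun v => ?_
        have : (v : Rn n) = ((homeomorphUnitSphereProd (Rn n)).symm
          (homeomorphUnitSphereProd (Rn n) v) : Rn n) := by simp
        conv_lhs => rw [this]
        simp only [homeomorphUnitSphereProd_symm_apply_coe]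
    _ = ∫⁻ z, G ((z.2 : ℝ) • (z.1 : Rn n)) ∂(((volume : Measure (Rn n)).toSphere).prod
          (Measure.volumeIoiPow (n - 1))) := by
        rw [hp.lintegral_comp (f := fun z : sphere (0 : Rn n) 1 × Ioi (0 : ℝ) =>
          G ((z.2 : ℝ) • (z.1 : Rn n))) (by fun_prop)]
    _ = ∫⁻ u : Ioi (0 : ℝ), ∫⁻ θ, G ((u : ℝ) • (θ : Rn n)) ∂((volume : Measure (Rn n)).toSphere)
          ∂(Measure.volumeIoiPow (n - 1)) := by
        rw [lintegral_prod_symm' _ (by fun_prop)]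
    _ = ∫⁻ u : Ioi (0 : ℝ), (fun u : ℝ => ENNReal.ofReal (u ^ (n - 1)) *
          ∫⁻ θ, G (u • θ) ∂(sphM n)) u ∂(volume.comap Subtype.val) := by
        rw [Measure.volumeIoiPow, lintegral_withDensity_eq_lintegral_mul _ (by fun_prop)]
        · refine lintegral_congr fun u => ?_
          simp only [Pi.mul_apply, sphM]
          rw [lintegral_map (by fun_prop) measurable_subtype_coe]
        · have : Measurable (fun z : Ioi (0 : ℝ) × sphere (0 : Rn n) 1 =>
            G ((z.1 : ℝ) • (z.2 : Rn n))) := by fun_prop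
          exact this.lintegral_prod_right'
    _ = _ := lintegral_subtype_comap measurableSet_Ioi (fun u : ℝ => ENNReal.ofReal (u ^ (n - 1)) *
          ∫⁻ θ, G (u • θ) ∂(sphM n))

lemma sph_bound (n : ℕ) (hn : 2 ≤ n) : ∃ C : ℝ≥0, ∀ (f : Rn n → ℝ) (x : Rn n) (t : ℝ),
    0 < t → ∫⁻ θ, ENNReal.ofReal (f (x - t • θ)) ∂(sphM n) ≤ C * sphMax n f x := by
  obtain ⟨C, hC⟩ := sphM_le_μSph n hn
  refine ⟨C, fun f x t ht => ?_⟩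
  refine (lintegral_mono' hC le_rfl).trans ?_
  rw [lintegral_smul_measure, smul_eq_mul]
  gcongr
  exact le_iSup₂_of_le (f := fun t (_ : t ∈ Ioi (0 : ℝ)) => sphAvgE n f x t) t ht le_rfl

lemma HL_bound (n : ℕ) : ∃ C : ℝ≥0, ∀ (f : Rn n → ℝ) (x : Rn n) (t : ℝ), Measurable f →
    0 < t → ∫⁻ w in closedBall (0 : Rn n) 1, ENNReal.ofReal (f (x - t • w)) ≤ C * HLMax n f x := by
  set ω := (volume (ball (0 : Rn n) 1)) with hω
  have hωt : ω ≠ ∞ := measure_ball_lt_top.ne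
  refine ⟨2 ^ n * ω.toNNReal, fun f x t hf ht => ?_⟩
  have hfr : Module.finrank ℝ (Rn n) = n := by simp
  set g : Rn n → ℝ≥0∞ := fun y => (ball x (2 * t)).indicator (fun y => ENNReal.ofReal |f y|) y with hg
  have hgm : Measurable g := (Measurable.indicator (by fun_prop) measurableSet_ball)
  have h2 : ∫⁻ y, g y ≤ volume (ball x (2 * t)) * HLMax n f x := by
    rw [hg, lintegral_indicator measurableSet_ball]
    have hv0 : volume (ball x (2 * t)) ≠ 0 := (measure_ball_pos _ _ (by positivity)).ne'
    rw [← ENNReal.div_le_iff' hv0 measure_ball_lt_top.ne]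
    exact le_iSup₂_of_le (f := fun r (_ : r ∈ Ioi (0 : ℝ)) =>
      (∫⁻ y in ball x r, ENNReal.ofReal |f y|) / volume (ball x r)) (2 * t)
      (by simpa using ht) le_rfl
  calc ∫⁻ w in closedBall (0 : Rn n) 1, ENNReal.ofReal (f (x - t • w))
      ≤ ∫⁻ w in closedBall (0 : Rn n) 1, g (x - t • w) := by
        refine setLIntegral_mono' isClosed_closedBall.measurableSet fun w hw => ?_
        have : x - t • w ∈ ball x (2 * t) := by
          rw [mem_closedBall, dist_zero_right] at hw
          rw [mem_ball, dist_eq_norm]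
          simp only [sub_sub_cancel_left, norm_neg, norm_smul, Real.norm_eq_abs, abs_of_pos ht]
          nlinarith
        rw [hg]
        simp only [indicator_of_mem this]
        exact ENNReal.ofReal_le_ofReal (le_abs_self _)
    _ ≤ ∫⁻ w, g (x - t • w) := setLIntegral_le_lintegral _ _
    _ = ∫⁻ v, g (x - v) ∂(Measure.map (t • ·) volume) := by
        rw [lintegral_map (by fun_prop) (by fun_prop)]
    _ = ENNReal.ofReal (t ^ n)⁻¹ * ∫⁻ y, g y := by
        rw [Measure.map_addHaar_smul _ ht.ne', lintegral_smul_measure, smul_eq_mul, hfr,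
          abs_of_pos (by positivity), lintegral_sub_left_eq_self]
    _ ≤ ENNReal.ofReal (t ^ n)⁻¹ * (volume (ball x (2 * t)) * HLMax n f x) := by gcongr
    _ = _ := by
        rw [Measure.addHaar_ball_of_pos _ _ (by positivity), hfr, ← hω, mul_pow, ← mul_assoc, ← mul_assoc,
          ← ENNReal.ofReal_mul (by positivity)]
        have : (t ^ n)⁻¹ * (2 ^ n * t ^ n) = 2 ^ n := by field_simp
        rw [this, ENNReal.coe_mul, ENNReal.coe_toNNReal hωt, ENNReal.ofReal_pow (by norm_num)]
        simp

lemma lintegral_pi_prod (n : ℕ) : ∀ (k : ℕ) (g : Fin k → Rn n → ℝ≥0∞), (∀ j, Measurable (g j)) →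
    ∫⁻ w : Fin k → Rn n, ∏ j, g j (w j) = ∏ j, ∫⁻ v, g j v := by
  intro k
  induction k with
  | zero => intro g hg; simp [volume_pi]
  | succ k ih =>
    intro g hg
    have hmp := (volume_preserving_piFinSuccAbove (fun _ : Fin (k + 1) => Rn n) 0)
    have hm2 : Measurable (fun z : Rn n × (Fin k → Rn n) => g 0 z.1 * ∏ j : Fin k, g j.succ (z.2 j)) := by
      have := hg 0
      have : ∀ j : Fin k, Measurable (g j.succ) := fun j => hg _
      fun_prop
    have h := hmp.lintegral_comp hm2
    have e : ∀ w : Fin (k + 1) → Rn n, ∏ j, g j (w j) =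
        (fun z : Rn n × (Fin k → Rn n) => g 0 z.1 * ∏ j : Fin k, g j.succ (z.2 j))
          ((MeasurableEquiv.piFinSuccAbove (fun _ : Fin (k + 1) => Rn n) 0) w) := by
      intro w
      rw [Fin.prod_univ_succ]
      rfl
    simp_rw [e]
    rw [h, Measure.volume_eq_prod, lintegral_prod_mul (f := g 0) (g := fun v : Fin k → Rn n => ∏ j : Fin k, g j.succ (v j))
      (hg 0).aemeasurable (by
        have : ∀ j : Fin k, Measurable (g j.succ) := fun j => hg _
        refine Measurable.aemeasurable ?_
        fun_prop), ih _ fun j => hg _,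
      Fin.prod_univ_succ]

def chi (n : ℕ) : Rn n → ℝ≥0∞ := (closedBall 0 1).indicator 1

def psi : ℝ → ℝ≥0∞ := (Ioc (1 / 2) 1).indicator 1

lemma measurable_chi (n : ℕ) : Measurable (chi n) :=
  measurable_one.indicator isClosed_closedBall.measurableSet

lemma measurable_psi : Measurable psi := measurable_one.indicator measurableSet_Ioc

lemma ae_sphM (n : ℕ) : ∀ᵐ θ ∂(sphM n), ‖θ‖ = 1 := by
  have hms : MeasurableSet {θ : Rn n | ‖θ‖ = 1} := measurable_norm (measurableSet_singleton 1)
  rw [sphM, ae_map_iff measurable_subtype_coe.aemeasurable hms]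
  exact Filter.Eventually.of_forall fun θ => by simp

lemma radial_bound (n : ℕ) (hn : 2 ≤ n) : ∃ C : ℝ≥0, ∀ (a : ℝ), 1 ≤ a → a ≤ n →
    ∀ (f : Rn n → ℝ), Measurable f → ∀ (x : Rn n) (t b : ℝ), 0 < t → 0 ≤ b →
    ∀ (P : ℝ → ℝ≥0∞), Measurable P →
    ∫⁻ v, chi n v * P (‖v‖ ^ a + b) *
      ENNReal.ofReal (f (x - (t * (‖v‖ ^ a + b)⁻¹ ^ (1 / a)) • v)) ≤
    C * sphMax n f x * ∫⁻ s, P s := by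
  obtain ⟨C, hC⟩ := sph_bound n hn
  refine ⟨C, fun a ha han f hf x t b ht hb P hP => ?_⟩
  have hchi := measurable_chi n
  rw [polar n hn _ (by fun_prop)]
  have hinner : ∀ u ∈ Ioi (0 : ℝ), ENNReal.ofReal (u ^ (n - 1)) *
      ∫⁻ θ, chi n (u • θ) * P (‖u • θ‖ ^ a + b) *
        ENNReal.ofReal (f (x - (t * (‖u • θ‖ ^ a + b)⁻¹ ^ (1 / a)) • (u • θ))) ∂(sphM n) ≤
      C * sphMax n f x * (ENNReal.ofReal |a * u ^ (a - 1)| * P (u ^ a + b)) := by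
    intro u hu
    have hu0 : 0 < u := hu
    by_cases hu1 : u ≤ 1
    · have hpos : 0 < u ^ a + b := by have := Real.rpow_pos_of_pos hu0 a; linarith
      have h1 : ∫⁻ θ, chi n (u • θ) * P (‖u • θ‖ ^ a + b) *
          ENNReal.ofReal (f (x - (t * (‖u • θ‖ ^ a + b)⁻¹ ^ (1 / a)) • (u • θ))) ∂(sphM n) ≤
          P (u ^ a + b) * (C * sphMax n f x) := by
        calc _ ≤ ∫⁻ θ, P (u ^ a + b) *
              ENNReal.ofReal (f (x - (t * (u ^ a + b)⁻¹ ^ (1 / a) * u) • θ)) ∂(sphM n) := by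
              refine lintegral_mono_ae ?_
              filter_upwards [ae_sphM n] with θ hθ
              have e : ‖u • θ‖ = u := by
                rw [norm_smul, hθ, Real.norm_eq_abs, abs_of_pos hu0, mul_one]
              rw [e, smul_smul]
              gcongr
              calc chi n (u • θ) * P (u ^ a + b) ≤ 1 * P (u ^ a + b) := by
                    gcongr
                    exact indicator_le_self' (by simp) _
                _ = _ := one_mul _
          _ = P (u ^ a + b) * ∫⁻ θ,
              ENNReal.ofReal (f (x - (t * (u ^ a + b)⁻¹ ^ (1 / a) * u) • θ)) ∂(sphM n) :=
              lintegral_const_mul _ (by fun_prop)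
          _ ≤ _ := by
              gcongr
              exact hC f x _ (by positivity)
      have h2 : u ^ (n - 1) ≤ |a * u ^ (a - 1)| := by
        have h3 : u ^ (n - 1) ≤ u ^ (a - 1) := by
          rw [← Real.rpow_natCast]
          refine Real.rpow_le_rpow_of_exponent_ge hu0 hu1 ?_
          rw [Nat.cast_sub (by omega)]
          push_cast
          linarith
        have h4 : 0 ≤ u ^ (a - 1) := Real.rpow_nonneg hu0.le _
        rw [abs_of_nonneg (by positivity)]
        nlinarith
      calc _ ≤ ENNReal.ofReal |a * u ^ (a - 1)| * (P (u ^ a + b) * (C * sphMax n f x)) := by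
            gcongr
        _ = _ := by ring
    · have h0 : ∫⁻ θ, chi n (u • θ) * P (‖u • θ‖ ^ a + b) *
          ENNReal.ofReal (f (x - (t * (‖u • θ‖ ^ a + b)⁻¹ ^ (1 / a)) • (u • θ))) ∂(sphM n) = 0 := by
        rw [← lintegral_zero (μ := sphM n)]
        refine lintegral_congr_ae ?_
        filter_upwards [ae_sphM n] with θ hθ
        have e : ‖u • θ‖ = u := by
          rw [norm_smul, hθ, Real.norm_eq_abs, abs_of_pos hu0, mul_one]
        have : chi n (u • θ) = 0 := by
          apply indicator_of_notMem
          rw [mem_closedBall, dist_zero_right, e]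
          exact hu1
        rw [this]; simp
      rw [h0]; simp
  refine (setLIntegral_mono' measurableSet_Ioi hinner).trans ?_
  rw [lintegral_const_mul _ (by fun_prop)]
  have hcv := lintegral_image_eq_lintegral_abs_deriv_mul (s := Ioi (0 : ℝ))
    (f := fun u : ℝ => u ^ a + b) (f' := fun u => a * u ^ (a - 1)) measurableSet_Ioi
    (fun u _ => ((Real.hasDerivAt_rpow_const (Or.inr ha)).add_const b).hasDerivWithinAt)
    (fun u hu v hv huv => by
      have : u ^ a = v ^ a := by simpa using huv
      exact (Real.rpow_left_inj (mem_Ioi.1 hu).le (mem_Ioi.1 hv).le (by linarith)).1 this) P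
  rw [← hcv]
  exact mul_le_mul_right (setLIntegral_le_lintegral _ _) _

set_option maxHeartbeats 1000000 in
lemma cone_integral (n k : ℕ) (hn : 2 ≤ n) (a : Fin (k + 1) → ℝ)
    (ha : ∀ j, 1 ≤ a j) (han : ∀ j, a j ≤ (n : ℝ)) :
    ∃ C : ℝ≥0, ∀ (i : Fin (k + 1)) (f : Fin (k + 1) → Rn n → ℝ),
      (∀ j, Measurable (f j)) → ∀ (x : Rn n) (t : Fin (k + 1) → ℝ), (∀ j, 0 < t j) →
      ∫⁻ y, ∏ j, ENNReal.ofReal (f j (x - t j • y j)) ∂(coneM n a) ≤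
        C * sphMax n (f i) x * ∏ j : Fin k, HLMax n (f (i.succAbove j)) x := by
  obtain ⟨C₁, hC₁⟩ := radial_bound n hn
  obtain ⟨C₂, hC₂⟩ := HL_bound n
  refine ⟨C₁ * C₂ ^ k, fun i f hf x t ht => ?_⟩
  have hchi := measurable_chi n
  have hpsi := measurable_psi
  obtain ⟨q, hqd⟩ : ∃ q : Fin k → ℝ → Rn n → ℝ≥0∞, ∀ j s v, q j s v =
      chi n v * ENNReal.ofReal (f (i.succAbove j)
        (x - (t (i.succAbove j) * s⁻¹ ^ (1 / a (i.succAbove j))) • v)) :=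
    ⟨_, fun _ _ _ => rfl⟩
  have hq : ∀ j, Measurable (fun z : ℝ × Rn n => q j z.1 z.2) := by
    intro j
    have := hf (i.succAbove j)
    simp only [hqd]
    fun_prop
  let B : (Fin k → Rn n) → ℝ → ℝ≥0∞ := fun z s => psi s * ∏ j, q j s (z j)
  have hB : Measurable (fun p : (Fin k → Rn n) × ℝ => B p.1 p.2) := by
    have h0 : Measurable (fun p : (Fin k → Rn n) × ℝ => psi p.2) := hpsi.comp measurable_snd
    have h1 : ∀ j, Measurable (fun p : (Fin k → Rn n) × ℝ => q j p.2 (p.1 j)) := by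
      intro j
      have h2 : Measurable (fun p : (Fin k → Rn n) × ℝ => (p.2, p.1 j)) := by fun_prop
      exact (hq j).comp h2
    have h3 : Measurable (fun p : (Fin k → Rn n) × ℝ => ∏ j, q j p.2 (p.1 j)) :=
      Finset.measurable_fun_prod _ fun j _ => h1 j
    exact h0.mul h3
  let g : (Fin k → Rn n) → ℝ := fun z => ∑ j, ‖z j‖ ^ (a (i.succAbove j))
  have hg : Measurable g := by simp only [g]; fun_prop
  have hg0 : ∀ z, 0 ≤ g z := fun z => Finset.sum_nonneg fun j _ => by positivity
  let H : Rn n × (Fin k → Rn n) → ℝ≥0∞ := fun p =>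
    chi n p.1 * B p.2 (‖p.1‖ ^ a i + g p.2) *
      ENNReal.ofReal (f i (x - (t i * (‖p.1‖ ^ a i + g p.2)⁻¹ ^ (1 / a i)) • p.1))
  have hH : Measurable H := by
    have h1 : Measurable (fun p : Rn n × (Fin k → Rn n) => ‖p.1‖ ^ a i + g p.2) := by fun_prop
    have h2 : Measurable (fun p : Rn n × (Fin k → Rn n) => B p.2 (‖p.1‖ ^ a i + g p.2)) :=
      hB.comp (measurable_snd.prodMk h1)
    have h3 := hf i
    simp only [H]
    fun_prop
  have hmp := (volume_preserving_piFinSuccAbove (fun _ : Fin (k + 1) => Rn n) i)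
  have hF : Measurable (fun y : Fin (k + 1) → Rn n => ∏ j, ENNReal.ofReal (f j (x - t j • y j))) := by
    refine Finset.measurable_fun_prod _ fun j _ => ?_
    have := hf j
    fun_prop
  calc ∫⁻ y, ∏ j, ENNReal.ofReal (f j (x - t j • y j)) ∂(coneM n a)
      = ∫⁻ w in shell n a, ∏ j, ENNReal.ofReal (f j (x - t j • prj a w j)) := by
        rw [coneM, lintegral_map hF (measurable_prj a)]
    _ ≤ ∫⁻ w in shell n a,
          H ((MeasurableEquiv.piFinSuccAbove (fun _ : Fin (k + 1) => Rn n) i) w) := by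
        refine setLIntegral_mono' (measurableSet_shell a) fun w hw => ?_
        have hnorm := norm_le_one_of_Phi a ha w hw.2
        have hc : ∀ j, chi n (w j) = 1 := fun j => by
          apply indicator_of_mem
          rw [mem_closedBall, dist_zero_right]; exact hnorm j
        have hΦ : ‖w i‖ ^ a i + g (fun j => w (i.succAbove j)) = Phi a w := by
          rw [Phi, Fin.sum_univ_succAbove _ i]
        have hps : psi (Phi a w) = 1 := indicator_of_mem (s := Ioc (1 / 2 : ℝ) 1) hw _
        change _ ≤ chi n (w i) * B (fun j => w (i.succAbove j))
          (‖w i‖ ^ a i + g (fun j => w (i.succAbove j))) *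
          ENNReal.ofReal (f i (x - (t i *
            (‖w i‖ ^ a i + g (fun j => w (i.succAbove j)))⁻¹ ^ (1 / a i)) • w i))
        rw [hΦ, hc i, one_mul]
        simp only [B, hqd, hps, hc, one_mul]
        rw [Fin.prod_univ_succAbove _ i, mul_comm]
        simp only [prj, dil, smul_smul]
        exact le_rfl
    _ ≤ ∫⁻ w, H ((MeasurableEquiv.piFinSuccAbove (fun _ : Fin (k + 1) => Rn n) i) w) :=
        setLIntegral_le_lintegral _ _
    _ = ∫⁻ p, H p := hmp.lintegral_comp hH
    _ = ∫⁻ z, ∫⁻ v, H (v, z) := by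
        rw [Measure.volume_eq_prod, lintegral_prod_symm' _ hH]
    _ ≤ ∫⁻ z, C₁ * sphMax n (f i) x * ∫⁻ s, B z s := by
        refine lintegral_mono fun z => ?_
        exact hC₁ (a i) (ha i) (han i) (f i) (hf i) x (t i) (g z) (ht i) (hg0 z) (B z)
          (hB.comp measurable_prodMk_left)
    _ = C₁ * sphMax n (f i) x * ∫⁻ z, ∫⁻ s, B z s :=
        lintegral_const_mul _ hB.lintegral_prod_right'
    _ = C₁ * sphMax n (f i) x * ∫⁻ s, ∫⁻ z, B z s := by
        rw [lintegral_lintegral_swap hB.aemeasurable]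
    _ ≤ C₁ * sphMax n (f i) x * ∫⁻ s, psi s *
          ∏ j : Fin k, (C₂ * HLMax n (f (i.succAbove j)) x) := by
        gcongr with s
        have hqs : ∀ j, Measurable (q j s) := fun j => (hq j).comp measurable_prodMk_left
        simp only [B]
        have hprod : Measurable (fun z : Fin k → Rn n => ∏ j, q j s (z j)) :=
          Finset.measurable_fun_prod _ fun j _ => (hqs j).comp (measurable_pi_apply j)
        rw [lintegral_const_mul _ hprod, lintegral_pi_prod n k (fun j => q j s) hqs]
        by_cases hs : s ∈ Ioc (1 / 2 : ℝ) 1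
        · gcongr with j
          have hs0 : 0 < s := by linarith [hs.1]
          refine le_trans (le_of_eq ?_) (hC₂ (f (i.succAbove j)) x
            (t (i.succAbove j) * s⁻¹ ^ (1 / a (i.succAbove j))) (hf _)
            (by have := ht (i.succAbove j); positivity))
          rw [← lintegral_indicator isClosed_closedBall.measurableSet]
          refine lintegral_congr fun v => ?_
          simp only [hqd, chi, indicator]
          split_ifs <;> simp
        · have : psi s = 0 := indicator_of_notMem hs _
          rw [this]; simp
    _ ≤ C₁ * sphMax n (f i) x * ∏ j : Fin k, (C₂ * HLMax n (f (i.succAbove j)) x) := by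
        gcongr
        rw [lintegral_mul_const _ hpsi]
        have : ∫⁻ s, psi s ≤ 1 := by
          rw [psi, lintegral_indicator_one measurableSet_Ioc, Real.volume_Ioc]
          exact ENNReal.ofReal_le_one.2 (by norm_num)
        calc _ ≤ 1 * _ := mul_le_mul_left this _
          _ = _ := one_mul _
    _ = _ := by
        rw [Finset.prod_mul_distrib, Finset.prod_const, Finset.card_univ, Fintype.card_fin]
        push_cast
        ring

/-- The multilinear pointwise domination (4.6): if `a_j ≤ n` for every `j`, then for
each `i` the maximal function `𝔐_m^𝐚` is dominated by `ℳ_s f_i · ∏_{j≠i} M f_j`. -/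
theorem multilinear_maximal_pointwise_domination
    (n m : ℕ) (hn : 2 ≤ n) (hm : 2 ≤ m) (a : Fin m → ℝ)
    (ha : ∀ j, 1 ≤ a j) (han : ∀ j, a j ≤ (n : ℝ)) :
    ∃ C : ℝ≥0, ∀ (i : Fin m) (f : Fin m → Rn n → ℝ),
      (∀ j, Measurable (f j)) → (∀ j y, 0 ≤ f j y) →
      ∀ x : Rn n,
        mMaxE n m a f x ≤
          (C : ℝ≥0∞) * sphMax n (f i) x * ∏ j ∈ Finset.univ.erase i, HLMax n (f j) x := by
  obtain ⟨k, rfl⟩ : ∃ k, m = k + 1 := ⟨m - 1, by omega⟩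
  obtain ⟨C₁, hC₁⟩ := hausdorff_le_cone (n := n) (m := k + 1) (by omega) (by omega) a ha han
  obtain ⟨C₂, hC₂⟩ := cone_integral n k hn a ha han
  have hpos := hausdorff_Sm_pos (n := n) (m := k + 1) hn (by omega) a ha han
  set A := μH[(((k + 1 : ℕ) : ℝ) * n - 1)] (Sm n (k + 1) a) with hA
  have hAinv : A⁻¹ ≠ ∞ := ENNReal.inv_ne_top.2 hpos.ne'
  refine ⟨A⁻¹.toNNReal * C₁ * C₂, fun i f hf _ x => ?_⟩
  refine iSup₂_le fun t ht => ?_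
  have hprod : ∏ j ∈ Finset.univ.erase i, HLMax n (f j) x =
      ∏ j : Fin k, HLMax n (f (i.succAbove j)) x := by
    have : (Finset.univ.erase i : Finset (Fin (k + 1))) =
        Finset.univ.map (Fin.succAboveEmb i) := by
      ext j
      simp only [Finset.mem_erase, Finset.mem_univ, and_true, Finset.mem_map, true_and,
        Fin.coe_succAboveEmb]
      exact (Fin.exists_succAbove_eq_iff).symm
    rw [this, Finset.prod_map]
    rfl
  rw [hprod, mAvgE, μSm, lintegral_smul_measure, smul_eq_mul, ← hA]
  calc _ ≤ A⁻¹ * (C₁ * (C₂ * sphMax n (f i) x *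
        ∏ j : Fin k, HLMax n (f (i.succAbove j)) x)) := by
        gcongr
        refine (lintegral_mono' hC₁ le_rfl).trans ?_
        rw [lintegral_smul_measure, smul_eq_mul]
        gcongr
        exact hC₂ i f hf x t ht
    _ = _ := by
        rw [ENNReal.coe_mul, ENNReal.coe_mul, ENNReal.coe_toNNReal hAinv]
        ring
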